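/- Fix b > 0, 0 < α ≤ 1, E ∈ ℝ. Define Cₙ = [[1, -b],[1, 0]] + (2n)^{-α}[[bE + E/(2b), 0],[E/(2b), -E/2]] + (2n)^{-1}[[0, 0],[-α, αb]], B̃ₙ = [[0, 1],[-1, 2]] + (2n)^{-α}[[0, 0],[0, bE]] + n^{-1}[[0, 0],[α, -α]], and Bₙ = T_{2n}T_{2n-1} as in the critical Jacobi model. Then CₙBₙCₙ^{-1} = -B̃ₙ + O(n^{-2α}), i.e., there is a constant C with ‖CₙBₙCₙ^{-1} + B̃ₙ‖ ≤ C·n^{-2α} for all sufficiently large n. -/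

import Mathlib

/-- Diagonal entries `bₙ = b nᵅ` (n odd), `0` (n even). -/
noncomputable def bcrit (b α : ℝ) (n : ℕ) : ℝ := if Odd n then b * (n : ℝ) ^ α else 0

/-- One-step transfer matrix `Tₘ = [[0,1],[-a_{m-1}/aₘ, (E - bₘ)/aₘ]]`, `aₙ = nᵅ`. -/
noncomputable def Tcrit (b α E : ℝ) (m : ℕ) : Matrix (Fin 2) (Fin 2) ℝ :=
  !![0, 1; -((((m : ℝ) - 1) / (m : ℝ)) ^ α), (E - bcrit b α m) / (m : ℝ) ^ α]

/-- Two-step transfer matrix `Bₙ = T_{2n} T_{2n-1}`. -/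
noncomputable def Bcrit (b α E : ℝ) (n : ℕ) : Matrix (Fin 2) (Fin 2) ℝ :=
  Tcrit b α E (2 * n) * Tcrit b α E (2 * n - 1)

/-- The conjugating matrices `Cₙ`. -/
noncomputable def Cmat (b α E : ℝ) (n : ℕ) : Matrix (Fin 2) (Fin 2) ℝ :=
  !![1, -b; 1, 0]
    + ((2 * (n : ℝ)) ^ α)⁻¹ • !![b * E + E / (2 * b), 0; E / (2 * b), -E / 2]
    + (2 * (n : ℝ))⁻¹ • !![0, 0; -α, α * b]

/-- The model matrices `B̃ₙ`. -/
noncomputable def Btilde (b α E : ℝ) (n : ℕ) : Matrix (Fin 2) (Fin 2) ℝ :=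
  !![0, 1; -1, 2] + ((2 * (n : ℝ)) ^ α)⁻¹ • !![0, 0; 0, b * E]
    + ((n : ℝ))⁻¹ • !![0, 0; α, -α]

/-! With `x = (2n)^{-α}` and `y = (2n)⁻¹ = O(x)`, all the matrices involved have the form
`A₀ + x A₁ + y A₂ + O(x²)`, and such expansions multiply by discarding the products `x²`, `xy` and
`y²`. Since `C B C⁻¹ + B̃ = (C B + B̃ C) C⁻¹` and `Cₙ` tends to an invertible matrix, it suffices
that the three coefficients of `Cₙ Bₙ + B̃ₙ Cₙ` vanish, a computation with constant matrices. -/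

open Asymptotics Filter Topology

section LinearExpansion

variable {ι 𝕜 V R : Type*} [NormedField 𝕜] {l : Filter ι} {x y : ι → 𝕜}

/-- The expansion `A = A₀ + x A₁ + y A₂ + O(x²)` along `l`. It is meant for `x → 0` and `y = O(x)`,
when it is the expansion of `A` to first order in both parameters. -/
def HasLinearExpansion [NormedAddCommGroup V] [NormedSpace 𝕜 V] (l : Filter ι)
    (x y : ι → 𝕜) (A : ι → V) (A₀ A₁ A₂ : V) : Prop :=
  (fun n ↦ A n - (A₀ + x n • A₁ + y n • A₂)) =O[l] fun n ↦ x n ^ 2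

namespace HasLinearExpansion

section Module

variable [NormedAddCommGroup V] [NormedSpace 𝕜 V] {A B : ι → V} {A₀ A₁ A₂ B₀ B₁ B₂ : V}

lemma of_eventuallyEq (h : ∀ᶠ n in l, A n = A₀ + x n • A₁ + y n • A₂) :
    HasLinearExpansion l x y A A₀ A₁ A₂ :=
  (isBigO_zero _ l).congr' (h.mono fun _ hn ↦ (sub_eq_zero.2 hn).symm) .rfl

lemma isBigO (hA : HasLinearExpansion l x y A 0 0 0) : A =O[l] fun n ↦ x n ^ 2 := by
  simpa [HasLinearExpansion] using hA

lemma add (hA : HasLinearExpansion l x y A A₀ A₁ A₂) (hB : HasLinearExpansion l x y B B₀ B₁ B₂) :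
    HasLinearExpansion l x y (fun n ↦ A n + B n) (A₀ + B₀) (A₁ + B₁) (A₂ + B₂) :=
  (IsBigO.add hA hB).congr_left fun n ↦ by module

lemma tendsto (hA : HasLinearExpansion l x y A A₀ A₁ A₂) (hx : Tendsto x l (𝓝 0))
    (hy : Tendsto y l (𝓝 0)) : Tendsto A l (𝓝 A₀) := by
  have hrem : Tendsto (fun n ↦ A n - (A₀ + x n • A₁ + y n • A₂)) l (𝓝 0) :=
    IsBigO.trans_tendsto hA (by simpa using hx.pow 2)
  have hlin : Tendsto (fun n ↦ A₀ + x n • A₁ + y n • A₂) l (𝓝 A₀) := by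
    simpa using (tendsto_const_nhds.add (hx.smul_const A₁)).add (hy.smul_const A₂)
  simpa using hrem.add hlin

end Module

lemma mul [NormedRing R] [NormedAlgebra 𝕜 R] {A B : ι → R} {A₀ A₁ A₂ B₀ B₁ B₂ : R}
    (hx : Tendsto x l (𝓝 0)) (hyx : y =O[l] x)
    (hA : HasLinearExpansion l x y A A₀ A₁ A₂) (hB : HasLinearExpansion l x y B B₀ B₁ B₂) :
    HasLinearExpansion l x y (fun n ↦ A n * B n)
      (A₀ * B₀) (A₀ * B₁ + A₁ * B₀) (A₀ * B₂ + A₂ * B₀) := by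
  have hy : Tendsto y l (𝓝 0) := hyx.trans_tendsto hx
  have hlin (M₁ M₂ : R) : (fun n ↦ x n • M₁ + y n • M₂) =O[l] x := by
    have hsmul {f : ι → 𝕜} (hf : f =O[l] x) (M : R) : (fun n ↦ f n • M) =O[l] x := by
      simpa using hf.smul (isBigO_const_const M (one_ne_zero (α := 𝕜)) l)
    exact (hsmul (isBigO_refl x l) M₁).add (hsmul hyx M₂)
  have hB_one : B =O[l] fun _ ↦ (1 : 𝕜) := (hB.tendsto hx hy).isBigO_one 𝕜
  have hA_lin_one : (fun n ↦ A₀ + (x n • A₁ + y n • A₂)) =O[l] fun _ ↦ (1 : 𝕜) :=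
    (isBigO_const_const A₀ one_ne_zero l).add ((hlin A₁ A₂).trans (hx.isBigO_one 𝕜))
  have hA_rem_mul : (fun n ↦ (A n - (A₀ + x n • A₁ + y n • A₂)) * B n) =O[l] fun n ↦ x n ^ 2 := by
    simpa using IsBigO.mul hA hB_one
  have hmul_B_rem : (fun n ↦ (A₀ + (x n • A₁ + y n • A₂)) * (B n - (B₀ + x n • B₁ + y n • B₂)))
      =O[l] fun n ↦ x n ^ 2 := by
    simpa using hA_lin_one.mul hB
  have hquad : (fun n ↦ (x n • A₁ + y n • A₂) * (x n • B₁ + y n • B₂)) =O[l] fun n ↦ x n ^ 2 := by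
    simpa [sq] using (hlin A₁ A₂).mul (hlin B₁ B₂)
  refine ((hA_rem_mul.add hmul_B_rem).add hquad).congr_left fun n ↦ ?_
  simp only [mul_add, add_mul, sub_mul, mul_sub, smul_mul_assoc, mul_smul_comm, smul_add]
  module

end HasLinearExpansion

end LinearExpansion

lemma isBigO_conj_add_of_tendsto_isUnit {ι R F : Type*} [NormedRing R] [HasSummableGeomSeries R]
    [NormedField F] {l : Filter ι} {C B T : ι → R} {C₀ : R} {g : ι → F}
    (hC : Tendsto C l (𝓝 C₀)) (hC₀ : IsUnit C₀)
    (h : (fun n ↦ C n * B n + T n * C n) =O[l] g) :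
    (fun n ↦ C n * B n * Ring.inverse (C n) + T n) =O[l] g := by
  have hunit : ∀ᶠ n in l, IsUnit (C n) := hC.eventually (Units.isOpen.mem_nhds hC₀)
  have hinv : (fun n ↦ Ring.inverse (C n)) =O[l] fun _ ↦ (1 : F) := by
    obtain ⟨u, rfl⟩ := hC₀
    exact ((NormedRing.inverse_continuousAt u).tendsto.comp hC).isBigO_one F
  refine (h.mul hinv).congr' (hunit.mono fun n hn ↦ ?_) (by simp)
  change (C n * B n + T n * C n) * Ring.inverse (C n) = _
  rw [add_mul, mul_assoc (T n), Ring.mul_inverse_cancel _ hn, mul_one]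

section MatrixNorm

open scoped Matrix.Norms.Operator

lemma norm_entry_le_linfty_opNorm {m n V : Type*} [Fintype m] [Fintype n]
    [SeminormedAddCommGroup V] (A : Matrix m n V) (i : m) (j : n) : ‖A i j‖ ≤ ‖A‖ := by
  rw [← coe_nnnorm, ← coe_nnnorm, NNReal.coe_le_coe, Matrix.linfty_opNNNorm_def]
  calc ‖A i j‖₊ ≤ ∑ k, ‖A i k‖₊ :=
        Finset.single_le_sum (f := fun k ↦ ‖A i k‖₊) (fun _ _ ↦ zero_le) (Finset.mem_univ j)
    _ ≤ _ := Finset.le_sup (f := fun i ↦ ∑ k, ‖A i k‖₊) (Finset.mem_univ i)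

end MatrixNorm

section ScalarAsymptotics

lemma one_sub_rpow_isBigO (α : ℝ) :
    (fun t : ℝ ↦ (1 - t) ^ α - (1 - α * t)) =O[𝓝 0] fun t ↦ t ^ 2 := by
  have hneg : Tendsto (fun t : ℝ ↦ -t) (𝓝 0) (𝓝 0) := by
    simpa using (continuous_neg (G := ℝ)).tendsto 0
  have hpartialSum (t : ℝ) : (binomialSeries ℝ α).partialSum 2 t = 1 + α * t := by
    simp [FormalMultilinearSeries.partialSum, Finset.sum_range_succ, binomialSeries,
      FormalMultilinearSeries.coeff_ofScalars, mul_comm]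
  have htaylor := ((Real.one_add_rpow_hasFPowerSeriesAt_zero (a := α)).isBigO_sub_partialSum_pow
    2).comp_tendsto hneg
  simpa [Function.comp_def, hpartialSum, ← sub_eq_add_neg] using htaylor

lemma sub_one_div_self_rpow_isBigO (α : ℝ) :
    (fun t : ℝ ↦ ((t - 1) / t) ^ α - (1 - α * t⁻¹)) =O[atTop] fun t ↦ t⁻¹ ^ 2 := by
  refine ((one_sub_rpow_isBigO α).comp_tendsto tendsto_inv_atTop_zero).congr' ?_ .rfl
  filter_upwards [eventually_ne_atTop 0] with t ht
  simp [sub_div, ht]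

lemma one_sub_rpow_sub_one_isBigO (α : ℝ) :
    (fun t : ℝ ↦ (1 - t) ^ α - 1) =O[𝓝 0] fun t ↦ t := by
  have hsq : (fun t : ℝ ↦ t ^ 2) =O[𝓝 0] fun t ↦ t := by
    simpa [sq] using (isBigO_refl (fun t : ℝ ↦ t) (𝓝 0)).mul (tendsto_id.isBigO_one ℝ)
  refine (((one_sub_rpow_isBigO α).trans hsq).sub
    ((isBigO_refl (fun t : ℝ ↦ t) _).const_mul_left α)).congr_left fun t ↦ ?_
  ring

end ScalarAsymptotics

section SmallParameters

/-- The parameter `y = (2n)⁻¹` of the expansions. -/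
noncomputable def invEvenIndex (n : ℕ) : ℝ := (2 * (n : ℝ))⁻¹

/-- The parameter `x = (2n)^{-α}` of the expansions, that is, `1 / a_{2n}`. -/
noncomputable def invEvenWeight (α : ℝ) (n : ℕ) : ℝ := ((2 * (n : ℝ)) ^ α)⁻¹

lemma tendsto_two_mul_natCast_atTop : Tendsto (fun n : ℕ ↦ 2 * (n : ℝ)) atTop atTop :=
  tendsto_natCast_atTop_atTop.const_mul_atTop two_pos

lemma tendsto_two_mul_natCast_sub_one_atTop :
    Tendsto (fun n : ℕ ↦ 2 * (n : ℝ) - 1) atTop atTop :=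
  tendsto_atTop_add_const_right _ (-1) tendsto_two_mul_natCast_atTop

lemma tendsto_invEvenIndex : Tendsto invEvenIndex atTop (𝓝 0) :=
  tendsto_two_mul_natCast_atTop.inv_tendsto_atTop

lemma tendsto_invEvenWeight {α : ℝ} (h0 : 0 < α) : Tendsto (invEvenWeight α) atTop (𝓝 0) :=
  ((tendsto_rpow_atTop h0).comp tendsto_two_mul_natCast_atTop).inv_tendsto_atTop

lemma invEvenIndex_isBigO_invEvenWeight {α : ℝ} (h1 : α ≤ 1) :
    invEvenIndex =O[atTop] invEvenWeight α := by
  refine .of_bound' ?_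
  filter_upwards [tendsto_two_mul_natCast_atTop.eventually_ge_atTop 1] with n hn
  rw [invEvenIndex, invEvenWeight, Real.norm_of_nonneg (by positivity),
    Real.norm_of_nonneg (by positivity)]
  gcongr
  exact Real.rpow_le_self_of_one_le hn h1

lemma invEvenWeight_sq_isBigO (α : ℝ) :
    (fun n ↦ invEvenWeight α n ^ 2) =O[atTop] fun n : ℕ ↦ (n : ℝ) ^ (-(2 * α)) := by
  refine .of_bound (2 ^ (-(2 * α))) (.of_forall fun n ↦ ?_)
  have hsq : invEvenWeight α n ^ 2 = (2 * (n : ℝ)) ^ (-(2 * α)) := by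
    rw [invEvenWeight, inv_pow, Real.rpow_neg (by positivity), mul_comm 2 α,
      Real.rpow_mul (by positivity), Real.rpow_two]
  rw [hsq, Real.mul_rpow two_pos.le n.cast_nonneg, Real.norm_of_nonneg (by positivity),
    Real.norm_of_nonneg (by positivity)]

lemma inv_odd_isBigO_invEvenIndex :
    (fun n : ℕ ↦ (2 * (n : ℝ) - 1)⁻¹) =O[atTop] invEvenIndex := by
  refine .of_bound 2 ?_
  filter_upwards [tendsto_two_mul_natCast_atTop.eventually_ge_atTop 2] with n hn
  have hodd : 0 < 2 * (n : ℝ) - 1 := by linarith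
  rw [invEvenIndex, Real.norm_of_nonneg (by positivity), Real.norm_of_nonneg (by positivity),
    ← div_eq_mul_inv, inv_le_comm₀ hodd (by positivity), inv_div]
  linarith

lemma inv_odd_sub_invEvenIndex_isBigO :
    (fun n : ℕ ↦ (2 * (n : ℝ) - 1)⁻¹ - invEvenIndex n) =O[atTop] fun n ↦ invEvenIndex n ^ 2 := by
  have hprod : (fun n : ℕ ↦ (2 * (n : ℝ) - 1)⁻¹ * invEvenIndex n) =O[atTop]
      fun n ↦ invEvenIndex n ^ 2 := by
    simpa only [sq] using inv_odd_isBigO_invEvenIndex.mul (isBigO_refl invEvenIndex atTop)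
  refine hprod.congr' ?_ .rfl
  filter_upwards [tendsto_two_mul_natCast_atTop.eventually_gt_atTop 1] with n hn
  have hodd : 2 * (n : ℝ) - 1 ≠ 0 := by linarith
  have heven : 2 * (n : ℝ) ≠ 0 := by linarith
  rw [invEvenIndex, inv_sub_inv hodd heven]
  field_simp
  ring

lemma even_ratio_rpow_isBigO (α : ℝ) :
    (fun n : ℕ ↦ ((2 * (n : ℝ) - 1) / (2 * n)) ^ α - (1 - α * invEvenIndex n)) =O[atTop]
      fun n ↦ invEvenIndex n ^ 2 :=
  (sub_one_div_self_rpow_isBigO α).comp_tendsto tendsto_two_mul_natCast_atTop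

lemma odd_ratio_rpow_isBigO (α : ℝ) :
    (fun n : ℕ ↦ ((2 * (n : ℝ) - 1 - 1) / (2 * n - 1)) ^ α - (1 - α * invEvenIndex n)) =O[atTop]
      fun n ↦ invEvenIndex n ^ 2 := by
  have hodd := ((sub_one_div_self_rpow_isBigO α).comp_tendsto
    tendsto_two_mul_natCast_sub_one_atTop).trans (inv_odd_isBigO_invEvenIndex.pow 2)
  refine (hodd.sub (inv_odd_sub_invEvenIndex_isBigO.const_mul_left α)).congr_left fun n ↦ ?_
  simp only [Function.comp_apply]
  ring

lemma inv_odd_weight_sub_invEvenWeight_isBigO (α : ℝ) :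
    (fun n : ℕ ↦ ((2 * (n : ℝ) - 1) ^ α)⁻¹ - invEvenWeight α n) =O[atTop]
      fun n ↦ invEvenWeight α n * invEvenIndex n := by
  refine ((isBigO_refl (invEvenWeight α) atTop).mul
    ((one_sub_rpow_sub_one_isBigO (-α)).comp_tendsto tendsto_invEvenIndex)).congr' ?_ .rfl
  filter_upwards [tendsto_two_mul_natCast_atTop.eventually_gt_atTop 1] with n hn
  have hodd : 0 ≤ 1 - invEvenIndex n := sub_nonneg.2 (inv_le_one_of_one_le₀ hn.le)
  have hfactor : 2 * (n : ℝ) - 1 = 2 * n * (1 - invEvenIndex n) := by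
    rw [invEvenIndex, mul_sub, mul_inv_cancel₀ (by linarith), mul_one]
  rw [hfactor, Real.mul_rpow (by positivity) hodd, mul_inv, ← Real.rpow_neg hodd, invEvenWeight]
  simp only [Function.comp_apply]
  ring

end SmallParameters

section JacobiExpansions

open scoped Matrix.Norms.Operator

variable (b E : ℝ) {α : ℝ}

/-- `A = A₀ + (2n)^{-α} A₁ + (2n)⁻¹ A₂ + O((2n)^{-2α})`, the shape shared by all the matrices of
the critical Jacobi model. -/
abbrev HasJacobiExpansion (α : ℝ) (A : ℕ → Matrix (Fin 2) (Fin 2) ℝ)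
    (A₀ A₁ A₂ : Matrix (Fin 2) (Fin 2) ℝ) : Prop :=
  HasLinearExpansion atTop (invEvenWeight α) invEvenIndex A A₀ A₁ A₂

lemma Tcrit_even (α : ℝ) (n : ℕ) :
    Tcrit b α E (2 * n) =
      !![0, 1; -((2 * (n : ℝ) - 1) / (2 * n)) ^ α, E * invEvenWeight α n] := by
  simp [Tcrit, bcrit, invEvenWeight, div_eq_mul_inv]

lemma Tcrit_odd (α : ℝ) {n : ℕ} (hn : 1 ≤ n) :
    Tcrit b α E (2 * n - 1) =
      !![0, 1; -((2 * (n : ℝ) - 1 - 1) / (2 * n - 1)) ^ α,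
        E * ((2 * (n : ℝ) - 1) ^ α)⁻¹ - b] := by
  have hcast : ((2 * n - 1 : ℕ) : ℝ) = 2 * n - 1 := by
    rw [Nat.cast_sub (by omega)]
    push_cast
    ring
  have hodd : Odd (2 * n - 1) := ⟨n - 1, by omega⟩
  have hpos : 0 < 2 * (n : ℝ) - 1 := by
    have : (1 : ℝ) ≤ n := by exact_mod_cast hn
    linarith
  have hweight : (2 * (n : ℝ) - 1) ^ α ≠ 0 := (Real.rpow_pos_of_pos hpos α).ne'
  rw [Tcrit, bcrit, if_pos hodd, hcast, sub_div E, mul_div_cancel_right₀ _ hweight,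
    div_eq_mul_inv E]

lemma hasJacobiExpansion_Tcrit_even (h1 : α ≤ 1) :
    HasJacobiExpansion α (fun n ↦ Tcrit b α E (2 * n))
      !![0, 1; -1, 0] !![0, 0; 0, E] !![0, 0; α, 0] := by
  have hratio := (even_ratio_rpow_isBigO α).trans ((invEvenIndex_isBigO_invEvenWeight h1).pow 2)
  have hmatrix := hratio.smul (isBigO_const_const !![0, 0; (-1 : ℝ), 0] (one_ne_zero (α := ℝ)) _)
  refine (hmatrix.congr_left fun n ↦ ?_).trans (by simpa using isBigO_refl _ _)
  simp only [Tcrit_even]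
  ext i j
  fin_cases i <;> fin_cases j <;> simp <;> ring

lemma hasJacobiExpansion_Tcrit_odd (h1 : α ≤ 1) :
    HasJacobiExpansion α (fun n ↦ Tcrit b α E (2 * n - 1))
      !![0, 1; -1, -b] !![0, 0; 0, E] !![0, 0; α, 0] := by
  have hyx := invEvenIndex_isBigO_invEvenWeight h1
  have hratio := (odd_ratio_rpow_isBigO α).trans (hyx.pow 2)
  have hweight : (fun n : ℕ ↦ ((2 * (n : ℝ) - 1) ^ α)⁻¹ - invEvenWeight α n) =O[atTop]
      fun n ↦ invEvenWeight α n ^ 2 := by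
    simpa only [sq] using (inv_odd_weight_sub_invEvenWeight_isBigO α).trans
      ((isBigO_refl _ _).mul hyx)
  have hmatrix :=
    (hratio.smul (isBigO_const_const !![0, 0; (-1 : ℝ), 0] (one_ne_zero (α := ℝ)) _)).add
      (hweight.smul (isBigO_const_const !![0, 0; 0, E] (one_ne_zero (α := ℝ)) _))
  refine (hmatrix.congr' ?_ .rfl).trans (by simpa using isBigO_refl _ _)
  filter_upwards [eventually_ge_atTop 1] with n hn
  rw [Tcrit_odd b E α hn]
  ext i j
  fin_cases i <;> fin_cases j <;> simp <;> ring

lemma hasJacobiExpansion_Bcrit (h0 : 0 < α) (h1 : α ≤ 1) :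
    HasJacobiExpansion α (Bcrit b α E)
      !![-1, -b; 0, -1] !![0, E; -E, -(b * E)] !![α, 0; 0, α] := by
  have hprod := (hasJacobiExpansion_Tcrit_even b E h1).mul (tendsto_invEvenWeight h0)
    (invEvenIndex_isBigO_invEvenWeight h1) (hasJacobiExpansion_Tcrit_odd b E h1)
  have hc₀ : !![0, 1; -1, 0] * !![0, 1; -1, -b] = !![-1, -b; 0, -1] := by simp
  have hc₁ : !![0, 1; -1, 0] * !![0, 0; 0, E] + !![0, 0; 0, E] * !![0, 1; -1, -b] =
      !![0, E; -E, -(b * E)] := by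
    simp [mul_comm]
  have hc₂ : !![0, 1; -1, 0] * !![0, 0; α, 0] + !![0, 0; α, 0] * !![0, 1; -1, -b] =
      !![α, 0; 0, α] := by
    simp
  rwa [hc₀, hc₁, hc₂] at hprod

lemma hasJacobiExpansion_Cmat (α : ℝ) :
    HasJacobiExpansion α (Cmat b α E) !![1, -b; 1, 0]
      !![b * E + E / (2 * b), 0; E / (2 * b), -E / 2] !![0, 0; -α, α * b] :=
  .of_eventuallyEq (.of_forall fun _ ↦ rfl)

lemma hasJacobiExpansion_Btilde (α : ℝ) :
    HasJacobiExpansion α (Btilde b α E)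
      !![0, 1; -1, 2] !![0, 0; 0, b * E] !![0, 0; 2 * α, -(2 * α)] := by
  refine .of_eventuallyEq (.of_forall fun n ↦ ?_)
  rw [Btilde, invEvenWeight, invEvenIndex, mul_inv]
  ext i j
  fin_cases i <;> fin_cases j <;> simp <;> ring

lemma intertwining_coeff_const_eq_zero :
    !![1, -b; 1, 0] * !![-1, -b; 0, -1] + !![0, 1; -1, 2] * !![1, -b; 1, 0] = 0 := by
  ext i j
  fin_cases i <;> fin_cases j <;> simp
  ring

lemma intertwining_coeff_invEvenIndex_eq_zero (α : ℝ) :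
    !![1, -b; 1, 0] * !![α, 0; 0, α] + !![0, 0; -α, α * b] * !![-1, -b; 0, -1]
      + (!![0, 1; -1, 2] * !![0, 0; -α, α * b]
        + !![0, 0; 2 * α, -(2 * α)] * !![1, -b; 1, 0]) = 0 := by
  ext i j
  fin_cases i <;> fin_cases j <;> simp <;> ring

variable {b}

lemma intertwining_coeff_invEvenWeight_eq_zero (hb : b ≠ 0) :
    !![1, -b; 1, 0] * !![0, E; -E, -(b * E)]
      + !![b * E + E / (2 * b), 0; E / (2 * b), -E / 2] * !![-1, -b; 0, -1]
      + (!![0, 1; -1, 2] * !![b * E + E / (2 * b), 0; E / (2 * b), -E / 2]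
        + !![0, 0; 0, b * E] * !![1, -b; 1, 0]) = 0 := by
  ext i j
  fin_cases i <;> fin_cases j <;> simp <;> field_simp <;> ring

lemma Cmat_mul_Bcrit_add_Btilde_mul_Cmat_isBigO (hb : b ≠ 0) (h0 : 0 < α) (h1 : α ≤ 1) :
    (fun n ↦ Cmat b α E n * Bcrit b α E n + Btilde b α E n * Cmat b α E n) =O[atTop]
      fun n ↦ invEvenWeight α n ^ 2 := by
  have hx := tendsto_invEvenWeight h0
  have hyx := invEvenIndex_isBigO_invEvenWeight h1
  have hC := hasJacobiExpansion_Cmat b E α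
  have hsum := (hC.mul hx hyx (hasJacobiExpansion_Bcrit b E h0 h1)).add
    ((hasJacobiExpansion_Btilde b E α).mul hx hyx hC)
  rw [intertwining_coeff_const_eq_zero, intertwining_coeff_invEvenWeight_eq_zero E hb,
    intertwining_coeff_invEvenIndex_eq_zero] at hsum
  exact hsum.isBigO

lemma isUnit_Cmat_limit (hb : b ≠ 0) : IsUnit !![1, -b; 1, 0] := by
  simpa [Matrix.isUnit_iff_isUnit_det, Matrix.det_fin_two_of] using hb

lemma conj_Bcrit_add_Btilde_isBigO (hb : b ≠ 0) (h0 : 0 < α) (h1 : α ≤ 1) :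
    (fun n ↦ Cmat b α E n * Bcrit b α E n * (Cmat b α E n)⁻¹ + Btilde b α E n) =O[atTop]
      fun n : ℕ ↦ (n : ℝ) ^ (-(2 * α)) := by
  have hC : Tendsto (Cmat b α E) atTop (𝓝 !![1, -b; 1, 0]) :=
    (hasJacobiExpansion_Cmat b E α).tendsto (tendsto_invEvenWeight h0) tendsto_invEvenIndex
  simp only [Matrix.nonsing_inv_eq_ringInverse]
  exact (isBigO_conj_add_of_tendsto_isUnit hC (isUnit_Cmat_limit hb)
    (Cmat_mul_Bcrit_add_Btilde_mul_Cmat_isBigO E hb h0 h1)).trans (invEvenWeight_sq_isBigO α)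

theorem stmt4_general (b α E : ℝ) (hb : b ≠ 0) (h0 : 0 < α) (h1 : α ≤ 1) :
    ∃ C : ℝ, ∃ N : ℕ, ∀ n : ℕ, N ≤ n → ∀ i j : Fin 2,
      |(Cmat b α E n * Bcrit b α E n * (Cmat b α E n)⁻¹ + Btilde b α E n) i j|
        ≤ C * (n : ℝ) ^ (-(2 * α)) := by
  obtain ⟨C, hC⟩ := (conj_Bcrit_add_Btilde_isBigO E hb h0 h1).bound
  obtain ⟨N, hN⟩ := eventually_atTop.1 hC
  refine ⟨C, N, fun n hn i j ↦ ?_⟩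
  rw [← Real.norm_eq_abs]
  refine (norm_entry_le_linfty_opNorm _ i j).trans ?_
  simpa only [Real.norm_of_nonneg (Real.rpow_nonneg n.cast_nonneg _)] using hN n hn

end JacobiExpansions

/-- Lemma 2.1: `Cₙ Bₙ Cₙ⁻¹ = -B̃ₙ + O(n^{-2α})`, i.e. there are a
constant `C` and an `N` with `‖Cₙ Bₙ Cₙ⁻¹ + B̃ₙ‖ ≤ C n^{-2α}` (entrywise) for all `n ≥ N`. -/
theorem stmt4 (b α E : ℝ) (hb : 0 < b) (h0 : 0 < α) (h1 : α ≤ 1) :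
    ∃ C : ℝ, ∃ N : ℕ, ∀ n : ℕ, N ≤ n → ∀ i j : Fin 2,
      |(Cmat b α E n * Bcrit b α E n * (Cmat b α E n)⁻¹ + Btilde b α E n) i j|
        ≤ C * (n : ℝ) ^ (-(2 * α)) :=
  stmt4_general b α E hb.ne' h0 h1
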